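/- Let α₁, α₂, β₁, β₂ > 0, 0 < ν₁, ν₂ < 1 and −1 < ρ < 1, and let F(t₁, t₂) = Φ₂((1/α₁)((t₁/β₁)^{ν₁} − (β₁/t₁)^{ν₁}), (1/α₂)((t₂/β₂)^{ν₂} − (β₂/t₂)^{ν₂}); ρ). Then for all t₁, t₂ > 0 the mixed second partial derivative ∂²F/∂t₁∂t₂ exists and equals the bivariate ν-BS joint density f_{T₁,T₂}(t₁, t₂). -/

import Mathlib

open Real Filter Set MeasureTheory

/-- The standard bivariate normal density with correlation `ρ`. -/
noncomputable def biNormalPDF (ρ u v : ℝ) : ℝ :=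
  (1 / (2 * Real.pi * Real.sqrt (1 - ρ ^ 2))) *
    Real.exp (-(u ^ 2 + v ^ 2 - 2 * ρ * u * v) / (2 * (1 - ρ ^ 2)))

/-- The standard bivariate normal cumulative distribution function with correlation `ρ`. -/
noncomputable def biNormalCDF (ρ u v : ℝ) : ℝ :=
  ∫ s in Set.Iic u, ∫ t in Set.Iic v, biNormalPDF ρ s t

/-!
With `φ` the standard normal density, the bivariate normal density factors as `φ(s)` times the
`N(ρ s, 1 - ρ²)` density of `t` (complete the square in `t`). This gives its integrability on the
plane and the `t`-uniform bound `C φ(s)`, so that `Φ₂` may be differentiated in its second argument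
under the integral in `s`. What remains is the fundamental theorem of calculus in the first
argument and the chain rule for the two marginal transformations.
-/

open ProbabilityTheory Function

section IntegralIic

variable {E : Type*} [NormedAddCommGroup E] [NormedSpace ℝ E] [CompleteSpace E]

theorem hasDerivAt_integral_Iic {f : ℝ → E} {u : ℝ} (hf : Integrable f) (hu : ContinuousAt f u) :
    HasDerivAt (fun u' => ∫ s in Iic u', f s) (f u) u := by
  have hsplit : (fun u' => ∫ s in Iic u', f s) =
      fun u' => (∫ s in Iic u, f s) + ∫ s in u..u', f s := by
    funext u'
    rw [← intervalIntegral.integral_Iic_sub_Iic hf.integrableOn hf.integrableOn, add_sub_cancel]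
  rw [hsplit]
  exact (intervalIntegral.integral_hasDerivAt_right hf.intervalIntegrable
    hf.aestronglyMeasurable.stronglyMeasurableAtFilter hu).const_add _

theorem hasDerivAt_integral_integral_Iic {X : Type*} [MeasurableSpace X] {μ : Measure X}
    [SFinite μ] {f : X → ℝ → E} {bound : X → ℝ} {v : ℝ}
    (hf : Integrable (uncurry f) (μ.prod volume)) (hfv : AEStronglyMeasurable (f · v) μ)
    (hcont : ∀ᵐ s ∂μ, Continuous (f s)) (hbound : Integrable bound μ)
    (hle : ∀ᵐ s ∂μ, ∀ t, ‖f s t‖ ≤ bound s) :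
    HasDerivAt (fun v' => ∫ s, (∫ t in Iic v', f s t) ∂μ) (∫ s, f s v ∂μ) v := by
  have hinner (v' : ℝ) : Integrable (fun s => ∫ t in Iic v', f s t) μ := by
    have hrestrict : Integrable (uncurry f) (μ.prod (volume.restrict (Iic v'))) :=
      hf.mono_measure (Measure.prod_mono le_rfl Measure.restrict_le_self)
    exact hrestrict.integral_prod_left
  have hderiv : ∀ᵐ s ∂μ, ∀ v₀ ∈ univ,
      HasDerivAt (fun v' => ∫ t in Iic v', f s t) (f s v₀) v₀ := by
    filter_upwards [hf.prod_right_ae, hcont] with s hint hs v₀ _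
    exact hasDerivAt_integral_Iic hint hs.continuousAt
  exact (hasDerivAt_integral_of_dominated_loc_of_deriv_le univ_mem
    (.of_forall fun v' => (hinner v').aestronglyMeasurable) (hinner v) hfv
    (hle.mono fun _ hs t _ => hs t) hbound hderiv).2

end IntegralIic

theorem gaussianPDFReal_le_inv_sqrt (m : ℝ) (σ : NNReal) (x : ℝ) :
    gaussianPDFReal m σ x ≤ (√(2 * π * σ))⁻¹ := by
  refine mul_le_of_le_one_right (by positivity) (exp_le_one_iff.mpr ?_)
  exact div_nonpos_of_nonpos_of_nonneg (neg_nonpos.mpr (sq_nonneg _)) (by positivity)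

section BiNormal

variable {ρ : ℝ}

theorem biNormalPDF_eq_gaussianPDFReal_mul (hρ : |ρ| < 1) (s t : ℝ) :
    biNormalPDF ρ s t =
      gaussianPDFReal 0 1 s * gaussianPDFReal (ρ * s) (1 - ρ ^ 2).toNNReal t := by
  have hvar : 0 < 1 - ρ ^ 2 := sub_pos.mpr ((sq_lt_one_iff_abs_lt_one ρ).mpr hρ)
  have hsquare : -(s ^ 2 + t ^ 2 - 2 * ρ * s * t) / (2 * (1 - ρ ^ 2)) =
      -(s - 0) ^ 2 / (2 * 1) + -(t - ρ * s) ^ 2 / (2 * (1 - ρ ^ 2)) := by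
    field_simp
    ring
  have hconst : 1 / (2 * π * √(1 - ρ ^ 2)) =
      (√(2 * π * 1))⁻¹ * (√(2 * π * (1 - ρ ^ 2)))⁻¹ := by
    rw [mul_one, sqrt_mul two_pi_pos.le (1 - ρ ^ 2), ← mul_inv, ← mul_assoc,
      mul_self_sqrt two_pi_pos.le, one_div]
  rw [biNormalPDF, gaussianPDFReal, gaussianPDFReal, coe_toNNReal _ hvar.le, NNReal.coe_one,
    hsquare, hconst, exp_add]
  ring

theorem continuous_uncurry_biNormalPDF (ρ : ℝ) : Continuous (uncurry (biNormalPDF ρ)) := by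
  unfold uncurry biNormalPDF
  fun_prop

theorem integrable_uncurry_biNormalPDF (hρ : |ρ| < 1) :
    Integrable (uncurry (biNormalPDF ρ)) (volume.prod volume) := by
  have hvar : (1 - ρ ^ 2).toNNReal ≠ 0 :=
    (toNNReal_pos.mpr (sub_pos.mpr ((sq_lt_one_iff_abs_lt_one ρ).mpr hρ))).ne'
  refine (integrable_prod_iff (continuous_uncurry_biNormalPDF ρ).aestronglyMeasurable).mpr ⟨?_, ?_⟩
  · refine .of_forall fun s => ?_
    simp only [uncurry_apply_pair, biNormalPDF_eq_gaussianPDFReal_mul hρ]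
    exact (integrable_gaussianPDFReal _ _).const_mul _
  · have hmarginal (s : ℝ) : ∫ t, ‖biNormalPDF ρ s t‖ = gaussianPDFReal 0 1 s := by
      simp only [biNormalPDF_eq_gaussianPDFReal_mul hρ, norm_mul,
        norm_of_nonneg (gaussianPDFReal_nonneg _ _ _)]
      rw [integral_const_mul, integral_gaussianPDFReal_eq_one _ hvar, mul_one]
    simpa only [uncurry_apply_pair, hmarginal] using integrable_gaussianPDFReal 0 1

theorem norm_biNormalPDF_le (hρ : |ρ| < 1) (s t : ℝ) :
    ‖biNormalPDF ρ s t‖ ≤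
      gaussianPDFReal 0 1 s * (√(2 * π * (1 - ρ ^ 2).toNNReal))⁻¹ := by
  rw [biNormalPDF_eq_gaussianPDFReal_mul hρ, norm_of_nonneg
    (mul_nonneg (gaussianPDFReal_nonneg _ _ _) (gaussianPDFReal_nonneg _ _ _))]
  exact mul_le_mul_of_nonneg_left (gaussianPDFReal_le_inv_sqrt _ _ _)
    (gaussianPDFReal_nonneg _ _ _)

theorem integrable_biNormalPDF_left (hρ : |ρ| < 1) (t : ℝ) :
    Integrable (fun s => biNormalPDF ρ s t) :=
  ((integrable_gaussianPDFReal 0 1).mul_const _).mono'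
    ((continuous_uncurry_biNormalPDF ρ).uncurry_right t).aestronglyMeasurable
    (.of_forall fun s => norm_biNormalPDF_le hρ s t)

theorem hasDerivAt_biNormalCDF_right (hρ : |ρ| < 1) (u v : ℝ) :
    HasDerivAt (fun v' => biNormalCDF ρ u v') (∫ s in Iic u, biNormalPDF ρ s v) v := by
  have hint : Integrable (uncurry (biNormalPDF ρ)) ((volume.restrict (Iic u)).prod volume) :=
    (integrable_uncurry_biNormalPDF hρ).mono_measure
      (Measure.prod_mono Measure.restrict_le_self le_rfl)
  exact hasDerivAt_integral_integral_Iic hint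
    ((continuous_uncurry_biNormalPDF ρ).uncurry_right v).aestronglyMeasurable
    (.of_forall fun s => (continuous_uncurry_biNormalPDF ρ).uncurry_left s)
    ((integrable_gaussianPDFReal 0 1).mul_const _).integrableOn
    (.of_forall (norm_biNormalPDF_le hρ))

theorem hasDerivAt_integral_Iic_biNormalPDF (hρ : |ρ| < 1) (u v : ℝ) :
    HasDerivAt (fun u' => ∫ s in Iic u', biNormalPDF ρ s v) (biNormalPDF ρ u v) u :=
  hasDerivAt_integral_Iic (integrable_biNormalPDF_left hρ v)
    ((continuous_uncurry_biNormalPDF ρ).uncurry_right v).continuousAt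

theorem hasDerivAt_biNormalCDF_comp_right (hρ : |ρ| < 1) {h : ℝ → ℝ} {h' y : ℝ}
    (hh : HasDerivAt h h' y) (u : ℝ) :
    HasDerivAt (fun y' => biNormalCDF ρ u (h y')) ((∫ s in Iic u, biNormalPDF ρ s (h y)) * h') y :=
  (hasDerivAt_biNormalCDF_right hρ u (h y)).comp y hh

theorem hasDerivAt_deriv_biNormalCDF_comp (hρ : |ρ| < 1) {g h : ℝ → ℝ} {g' h' x y : ℝ}
    (hg : HasDerivAt g g' x) (hh : HasDerivAt h h' y) :
    HasDerivAt (fun x' => deriv (fun y' => biNormalCDF ρ (g x') (h y')) y)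
      (biNormalPDF ρ (g x) (h y) * g' * h') x := by
  simp only [(hasDerivAt_biNormalCDF_comp_right hρ hh _).deriv]
  exact ((hasDerivAt_integral_Iic_biNormalPDF hρ (g x) (h y)).comp x hg).mul_const h'

end BiNormal

/-- The transformation `a(t) = ((t/β)^ν - (β/t)^ν) / α` that carries a ν-Birnbaum–Saunders variable
with shape `α`, scale `β` and exponent `ν` to a standard normal one. -/
noncomputable def nuBSStandardization (α β ν t : ℝ) : ℝ :=
  (1 / α) * ((t / β) ^ ν - (β / t) ^ ν)

/-- The bivariate ν-Birnbaum–Saunders joint density `f_{T₁,T₂}`, meaningful for `t₁, t₂ > 0`. -/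
noncomputable def bvNuBSPDF (α₁ β₁ ν₁ α₂ β₂ ν₂ ρ t₁ t₂ : ℝ) : ℝ :=
  (ν₁ * ν₂ / (2 * π * α₁ * α₂ * β₁ * β₂ * √(1 - ρ ^ 2))) *
    ((t₁ / β₁) ^ (ν₁ - 1) + (β₁ / t₁) ^ (ν₁ + 1)) *
    ((t₂ / β₂) ^ (ν₂ - 1) + (β₂ / t₂) ^ (ν₂ + 1)) *
    exp (-(1 / (2 * (1 - ρ ^ 2))) *
      ((1 / α₁ ^ 2) * ((t₁ / β₁) ^ ν₁ - (β₁ / t₁) ^ ν₁) ^ 2 +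
        (1 / α₂ ^ 2) * ((t₂ / β₂) ^ ν₂ - (β₂ / t₂) ^ ν₂) ^ 2 -
        (2 * ρ / (α₁ * α₂)) * ((t₁ / β₁) ^ ν₁ - (β₁ / t₁) ^ ν₁) *
          ((t₂ / β₂) ^ ν₂ - (β₂ / t₂) ^ ν₂)))

theorem hasDerivAt_nuBSStandardization (α ν : ℝ) {β t : ℝ} (hβ : 0 < β) (ht : 0 < t) :
    HasDerivAt (nuBSStandardization α β ν)
      (ν / (α * β) * ((t / β) ^ (ν - 1) + (β / t) ^ (ν + 1))) t := by
  have hdiv : HasDerivAt (fun t' => t' / β) (1 / β) t := (hasDerivAt_id t).div_const β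
  have hinv : HasDerivAt (fun t' => β / t') (-(β / t) ^ 2 / β) t := by
    refine ((hasDerivAt_inv ht.ne').const_mul β).congr_deriv ?_
    field_simp
  have hpow : (β / t) ^ (ν + 1) = (β / t) ^ (ν - 1) * (β / t) ^ 2 := by
    rw [← rpow_add_natCast (div_pos hβ ht).ne', Nat.cast_ofNat]
    ring_nf
  refine (((hdiv.rpow_const (.inl (div_pos ht hβ).ne')).sub
    (hinv.rpow_const (.inl (div_pos hβ ht).ne'))).const_mul (1 / α)).congr_deriv ?_
  rw [hpow]
  ring

theorem biNormalPDF_nuBSStandardization_mul (α₁ β₁ ν₁ α₂ β₂ ν₂ ρ t₁ t₂ : ℝ) :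
    biNormalPDF ρ (nuBSStandardization α₁ β₁ ν₁ t₁) (nuBSStandardization α₂ β₂ ν₂ t₂) *
        (ν₁ / (α₁ * β₁) * ((t₁ / β₁) ^ (ν₁ - 1) + (β₁ / t₁) ^ (ν₁ + 1))) *
        (ν₂ / (α₂ * β₂) * ((t₂ / β₂) ^ (ν₂ - 1) + (β₂ / t₂) ^ (ν₂ + 1))) =
      bvNuBSPDF α₁ β₁ ν₁ α₂ β₂ ν₂ ρ t₁ t₂ := by
  have hexponent (a b : ℝ) :
      -((1 / α₁ * a) ^ 2 + (1 / α₂ * b) ^ 2 - 2 * ρ * (1 / α₁ * a) * (1 / α₂ * b)) /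
          (2 * (1 - ρ ^ 2)) =
        -(1 / (2 * (1 - ρ ^ 2))) *
          ((1 / α₁ ^ 2) * a ^ 2 + (1 / α₂ ^ 2) * b ^ 2 - (2 * ρ / (α₁ * α₂)) * a * b) := by
    ring
  simp only [biNormalPDF, nuBSStandardization, bvNuBSPDF, hexponent]
  ring

theorem bvNuBS_mixed_partial_general {α₁ β₁ α₂ β₂ ρ t₁ t₂ : ℝ} (ν₁ ν₂ : ℝ)
    (hα₁ : α₁ ≠ 0) (hβ₁ : 0 < β₁) (hα₂ : α₂ ≠ 0) (hβ₂ : 0 < β₂) (hρ : |ρ| < 1)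
    (ht₁ : 0 < t₁) (ht₂ : 0 < t₂) :
    (∀ s₁, DifferentiableAt ℝ (fun s₂ => biNormalCDF ρ (nuBSStandardization α₁ β₁ ν₁ s₁)
        (nuBSStandardization α₂ β₂ ν₂ s₂)) t₂) ∧
      HasDerivAt (fun s₁ => deriv (fun s₂ => biNormalCDF ρ (nuBSStandardization α₁ β₁ ν₁ s₁)
        (nuBSStandardization α₂ β₂ ν₂ s₂)) t₂) (bvNuBSPDF α₁ β₁ ν₁ α₂ β₂ ν₂ ρ t₁ t₂) t₁ := by
  have h₁ := hasDerivAt_nuBSStandardization α₁ ν₁ hβ₁ ht₁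
  have h₂ := hasDerivAt_nuBSStandardization α₂ ν₂ hβ₂ ht₂
  refine ⟨fun s₁ => (hasDerivAt_biNormalCDF_comp_right hρ h₂ _).differentiableAt, ?_⟩
  rw [← biNormalPDF_nuBSStandardization_mul]
  exact hasDerivAt_deriv_biNormalCDF_comp hρ h₁ h₂

theorem bvNuBS_mixed_partial (α₁ β₁ ν₁ α₂ β₂ ν₂ ρ : ℝ)
    (hα₁ : 0 < α₁) (hβ₁ : 0 < β₁) (hν₁0 : 0 < ν₁) (hν₁1 : ν₁ < 1)
    (hα₂ : 0 < α₂) (hβ₂ : 0 < β₂) (hν₂0 : 0 < ν₂) (hν₂1 : ν₂ < 1)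
    (hρ1 : -1 < ρ) (hρ2 : ρ < 1)
    (F : ℝ → ℝ → ℝ)
    (hF : F = fun t₁ t₂ =>
      biNormalCDF ρ ((1 / α₁) * ((t₁ / β₁) ^ ν₁ - (β₁ / t₁) ^ ν₁))
        ((1 / α₂) * ((t₂ / β₂) ^ ν₂ - (β₂ / t₂) ^ ν₂))) :
    ∀ t₁ t₂ : ℝ, 0 < t₁ → 0 < t₂ →
      HasDerivAt (fun s₁ : ℝ => deriv (fun s₂ : ℝ => F s₁ s₂) t₂)
        ((ν₁ * ν₂ / (2 * Real.pi * α₁ * α₂ * β₁ * β₂ * Real.sqrt (1 - ρ ^ 2))) *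
          ((t₁ / β₁) ^ (ν₁ - 1) + (β₁ / t₁) ^ (ν₁ + 1)) *
          ((t₂ / β₂) ^ (ν₂ - 1) + (β₂ / t₂) ^ (ν₂ + 1)) *
          Real.exp (-(1 / (2 * (1 - ρ ^ 2))) *
            ((1 / α₁ ^ 2) * ((t₁ / β₁) ^ ν₁ - (β₁ / t₁) ^ ν₁) ^ 2 +
              (1 / α₂ ^ 2) * ((t₂ / β₂) ^ ν₂ - (β₂ / t₂) ^ ν₂) ^ 2 -
              (2 * ρ / (α₁ * α₂)) * ((t₁ / β₁) ^ ν₁ - (β₁ / t₁) ^ ν₁) *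
                ((t₂ / β₂) ^ ν₂ - (β₂ / t₂) ^ ν₂)))) t₁ := by
  subst hF
  exact fun t₁ t₂ ht₁ ht₂ => (bvNuBS_mixed_partial_general ν₁ ν₂ hα₁.ne' hβ₁ hα₂.ne' hβ₂
    (abs_lt.mpr ⟨hρ1, hρ2⟩) ht₁ ht₂).2
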